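/- For all complex parameters γ₁,γ₂,γ₃,γ₄, the operator Î₄ = p̂₂² + γ₁ q̂₂p̂₂ + γ₂( (q̂₁²+q̂₂²)p̂₂² − Ĉ² ) + γ₃( q̂₂³(p̂₂³ − p̂₁²p̂₂) + (q̂₁³+3q̂₁q̂₂²)p̂₁p̂₂² − 3i q̂₂²p̂₂² − 3i q̂₁q̂₂p̂₁p̂₂ − q̂₂p̂₂ ) + γ₄( (q̂₂⁴−q̂₁⁴)(p̂₂⁴ − p̂₁²p̂₂²) + 4(q̂₁³q̂₂+q̂₁q̂₂³)p̂₁p̂₂³ − 6i(q̂₂³+q̂₁²q̂₂)p̂₂³ − 6i(q̂₁³+q̂₁q̂₂²)p̂₁p̂₂² − 4(q̂₁²+q̂₂²)p̂₂² + 4Ĉ² ) commutes with the generalized quantum Zernike Hamiltonian Ĥ₄ = p̂₁² + p̂₂² + Σ_{n=1}^{4} γₙ D̂ⁿ: for every smooth function ψ : ℝ² → ℂ one has Ĥ₄(Î₄ψ) = Î₄(Ĥ₄ψ). -/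

import Mathlib

noncomputable section

/-- Wavefunctions on the plane. -/
abbrev WF := (ℝ × ℝ) → ℂ

/-- Operators acting on wavefunctions. -/
abbrev Op := WF → WF

/-- Position operator `q̂₁`: multiplication by `q₁`. -/
def q1op : Op := fun ψ x => (x.1 : ℂ) * ψ x

/-- Position operator `q̂₂`: multiplication by `q₂`. -/
def q2op : Op := fun ψ x => (x.2 : ℂ) * ψ x

/-- Momentum operator `p̂₁ = −i ∂/∂q₁`. -/
def p1op : Op := fun ψ x => -Complex.I * deriv (fun t => ψ (t, x.2)) x.1

/-- Momentum operator `p̂₂ = −i ∂/∂q₂`. -/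
def p2op : Op := fun ψ x => -Complex.I * deriv (fun t => ψ (x.1, t)) x.2

/-- The dilation operator `D̂ = q̂₁p̂₁ + q̂₂p̂₂`. -/
def Dop : Op := q1op ∘ p1op + q2op ∘ p2op

/-- The quantum angular momentum `Ĉ = q̂₁p̂₂ − q̂₂p̂₁`. -/
def Cop : Op := q1op ∘ p2op - q2op ∘ p1op

/-- The generalized quantum Zernike Hamiltonian for `N = 4`:
`Ĥ₄ = p̂₁² + p̂₂² + Σ_{n=1}^{4} γₙ D̂ⁿ`. -/
def H4op (γ₁ γ₂ γ₃ γ₄ : ℂ) : Op :=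
  p1op ∘ p1op + p2op ∘ p2op
    + γ₁ • Dop + γ₂ • (Dop ∘ Dop) + γ₃ • (Dop ∘ Dop ∘ Dop)
    + γ₄ • (Dop ∘ Dop ∘ Dop ∘ Dop)

/-- The fourth-order quantum integral, written for generic position and momentum
operators `Q₁, Q₂, P₁, P₂` (so that the interchange `(q̂₁,p̂₁) ↔ (q̂₂,p̂₂)` is
realized by permuting the arguments). -/
def Iop (Q1 Q2 P1 P2 : Op) (γ₁ γ₂ γ₃ γ₄ : ℂ) : Op :=
  let C : Op := Q1 ∘ P2 - Q2 ∘ P1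
  P2 ∘ P2 + γ₁ • (Q2 ∘ P2)
    + γ₂ • ((Q1 ∘ Q1 + Q2 ∘ Q2) ∘ (P2 ∘ P2) - C ∘ C)
    + γ₃ • ((Q2 ∘ Q2 ∘ Q2) ∘ (P2 ∘ P2 ∘ P2 - P1 ∘ P1 ∘ P2)
        + (Q1 ∘ Q1 ∘ Q1 + (3 : ℂ) • (Q1 ∘ Q2 ∘ Q2)) ∘ (P1 ∘ P2 ∘ P2)
        - (3 * Complex.I) • (Q2 ∘ Q2 ∘ P2 ∘ P2)
        - (3 * Complex.I) • (Q1 ∘ Q2 ∘ P1 ∘ P2)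
        - Q2 ∘ P2)
    + γ₄ • ((Q2 ∘ Q2 ∘ Q2 ∘ Q2 - Q1 ∘ Q1 ∘ Q1 ∘ Q1)
          ∘ (P2 ∘ P2 ∘ P2 ∘ P2 - P1 ∘ P1 ∘ P2 ∘ P2)
        + (4 : ℂ) • ((Q1 ∘ Q1 ∘ Q1 ∘ Q2 + Q1 ∘ Q2 ∘ Q2 ∘ Q2) ∘ (P1 ∘ P2 ∘ P2 ∘ P2))
        - (6 * Complex.I) • ((Q2 ∘ Q2 ∘ Q2 + Q1 ∘ Q1 ∘ Q2) ∘ (P2 ∘ P2 ∘ P2))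
        - (6 * Complex.I) • ((Q1 ∘ Q1 ∘ Q1 + Q1 ∘ Q2 ∘ Q2) ∘ (P1 ∘ P2 ∘ P2))
        - (4 : ℂ) • ((Q1 ∘ Q1 + Q2 ∘ Q2) ∘ (P2 ∘ P2))
        + (4 : ℂ) • (C ∘ C))

/-- The fourth-order quantum integral `Î₄`. -/
def I4op (γ₁ γ₂ γ₃ γ₄ : ℂ) : Op := Iop q1op q2op p1op p2op γ₁ γ₂ γ₃ γ₄

/-- `Î₄'`: obtained from `Î₄` by the interchange `(q̂₁,p̂₁) ↔ (q̂₂,p̂₂)`. -/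
def I4op' (γ₁ γ₂ γ₃ γ₄ : ℂ) : Op := Iop q2op q1op p2op p1op γ₁ γ₂ γ₃ γ₄

set_option linter.all false
set_option linter.unusedSimpArgs false
set_option linter.unreachableTactic false
set_option linter.unusedTactic false
set_option linter.unusedSectionVars false
open Complex

section
variable {A : Type*} [Ring A] [Algebra ℂ A] (a b p r : A)
structure Weyl (a b p r : A) : Prop where
  ab : b * a = a * b
  pr : r * p = p * r
  pa : p * a = a * p - I • 1
  rb : r * b = b * r - I • 1
  pb : p * b = b * p
  ra : r * a = a * r

variable {a b p r}
theorem lft {x y z : A} (h : x * y = z) (w : A) : x * (y * w) = z * w := by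
  rw [← mul_assoc, h]

def wI3 (a b p r : A) : A := (b * (b * b)) * (r * (r * r) - p * (p * r))
        + (a * (a * a) + (3 : ℂ) • (a * (b * b))) * (p * (r * r))
        - (3 * I) • (b * (b * (r * r)))
        - (3 * I) • (a * (b * (p * r))) - b * r
def wI4 (a b p r : A) : A :=
  (b * (b * (b * b)) - a * (a * (a * a))) * (r * (r * (r * r)) - p * (p * (r * r)))
        + (4 : ℂ) • ((a * (a * (a * b)) + a * (b * (b * b))) * (p * (r * (r * r))))
        - (6 * I) • ((b * (b * b) + a * (a * b)) * (r * (r * r)))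
        - (6 * I) • ((a * (a * a) + a * (b * b)) * (p * (r * r)))
        - (4 : ℂ) • ((a * a + b * b) * (r * r))
        + (4 : ℂ) • ((a * r - b * p) * (a * r - b * p))
def wI2 (a b p r : A) : A := (a * a + b * b) * (r * r) - (a * r - b * p) * (a * r - b * p)

theorem D1 (h : Weyl a b p r) : (a*p+b*r) * (b * r) = (b*r) * (a*p+b*r) := by
  simp only [wI2, wI3, wI4, mul_assoc, mul_add, add_mul, sub_mul, mul_sub, mul_one, one_mul,
    smul_mul_assoc, mul_smul_comm, h.ab, lft h.ab, h.pr, lft h.pr, h.pa, lft h.pa, h.rb, lft h.rb,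
    h.pb, lft h.pb, h.ra, lft h.ra]
theorem D2 (h : Weyl a b p r) : (a*p+b*r) * wI2 a b p r = wI2 a b p r * (a*p+b*r) := by
  simp only [wI2, wI3, wI4, mul_assoc, mul_add, add_mul, sub_mul, mul_sub, mul_one, one_mul,
    smul_mul_assoc, mul_smul_comm, h.ab, lft h.ab, h.pr, lft h.pr, h.pa, lft h.pa, h.rb, lft h.rb,
    h.pb, lft h.pb, h.ra, lft h.ra]
  match_scalars <;> (try ring_nf) <;> (try simp only [I_sq, I_pow_three, I_pow_four]) <;>
    (try ring_nf)
theorem D3 (h : Weyl a b p r) : (a*p+b*r) * wI3 a b p r = wI3 a b p r * (a*p+b*r) := by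
  simp only [wI2, wI3, wI4, mul_assoc, mul_add, add_mul, sub_mul, mul_sub, mul_one, one_mul,
    smul_mul_assoc, mul_smul_comm, h.ab, lft h.ab, h.pr, lft h.pr, h.pa, lft h.pa, h.rb, lft h.rb,
    h.pb, lft h.pb, h.ra, lft h.ra]
  match_scalars <;> (try ring_nf) <;> (try simp only [I_sq, I_pow_three, I_pow_four]) <;>
    (try ring_nf)
theorem D4 (h : Weyl a b p r) : (a*p+b*r) * wI4 a b p r = wI4 a b p r * (a*p+b*r) := by
  simp only [wI2, wI3, wI4, mul_assoc, mul_add, add_mul, sub_mul, mul_sub, mul_one, one_mul,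
    smul_mul_assoc, mul_smul_comm, h.ab, lft h.ab, h.pr, lft h.pr, h.pa, lft h.pa, h.rb, lft h.rb,
    h.pb, lft h.pb, h.ra, lft h.ra]
  match_scalars <;> (try ring_nf) <;> (try simp only [I_sq, I_pow_three, I_pow_four]) <;>
    (try ring_nf)
theorem H1 (h : Weyl a b p r) : (p*p+r*r) * (b*r) + (a*p+b*r) * (r*r) = (b*r)* (p*p+r*r) + (r*r)*(a*p+b*r) := by
  simp only [wI2, wI3, wI4, mul_assoc, mul_add, add_mul, sub_mul, mul_sub, mul_one, one_mul,
    smul_mul_assoc, mul_smul_comm, h.ab, lft h.ab, h.pr, lft h.pr, h.pa, lft h.pa, h.rb, lft h.rb,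
    h.pb, lft h.pb, h.ra, lft h.ra]
  match_scalars <;> (try ring_nf) <;> (try simp only [I_sq, I_pow_three, I_pow_four]) <;>
    (try ring_nf)
theorem H2 (h : Weyl a b p r) : (p*p+r*r) * wI2 a b p r + (a*p+b*r) * ((a*p+b*r) * (r*r)) = wI2 a b p r * (p*p+r*r) + (r*r)*((a*p+b*r)*(a*p+b*r)) := by
  simp only [wI2, wI3, wI4, mul_assoc, mul_add, add_mul, sub_mul, mul_sub, mul_one, one_mul,
    smul_mul_assoc, mul_smul_comm, h.ab, lft h.ab, h.pr, lft h.pr, h.pa, lft h.pa, h.rb, lft h.rb,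
    h.pb, lft h.pb, h.ra, lft h.ra]
  match_scalars <;> (try ring_nf) <;> (try simp only [I_sq, I_pow_three, I_pow_four]) <;>
    (try ring_nf)
theorem H3 (h : Weyl a b p r) : (p*p+r*r) * wI3 a b p r + (a*p+b*r) *((a*p+b*r) * ((a*p+b*r) * (r*r))) = wI3 a b p r * (p*p+r*r) + (r*r)*((a*p+b*r)*((a*p+b*r)*(a*p+b*r))) := by
  simp only [wI2, wI3, wI4, mul_assoc, mul_add, add_mul, sub_mul, mul_sub, mul_one, one_mul,
    smul_mul_assoc, mul_smul_comm, h.ab, lft h.ab, h.pr, lft h.pr, h.pa, lft h.pa, h.rb, lft h.rb,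
    h.pb, lft h.pb, h.ra, lft h.ra]
  match_scalars <;> (try ring_nf) <;> (try simp only [I_sq, I_pow_three, I_pow_four]) <;>
    (try ring_nf)
set_option maxHeartbeats 4000000 in
theorem H4 (h : Weyl a b p r) : (p*p+r*r) * wI4 a b p r + (a*p+b*r) *((a*p+b*r) *((a*p+b*r) * ((a*p+b*r) * (r*r)))) = wI4 a b p r * (p*p+r*r) + (r*r)*((a*p+b*r)*((a*p+b*r)*((a*p+b*r)*(a*p+b*r)))) := by
  simp only [wI2, wI3, wI4, mul_assoc, mul_add, add_mul, sub_mul, mul_sub, mul_one, one_mul,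
    smul_mul_assoc, mul_smul_comm, h.ab, lft h.ab, h.pr, lft h.pr, h.pa, lft h.pa, h.rb, lft h.rb,
    h.pb, lft h.pb, h.ra, lft h.ra]
  match_scalars <;> (try ring_nf) <;> (try simp only [I_sq, I_pow_three, I_pow_four]) <;>
    (try ring_nf)
end

theorem wcomm {A : Type*} [Ring A] [Algebra ℂ A] {a b p r : A} (h : Weyl a b p r)
    (g1 g2 g3 g4 : ℂ) (D : A) (hD : D = a*p+b*r) :
    (p*p+r*r + g1 • D + g2 • (D*D) + g3 • (D*(D*D)) + g4 • (D*(D*(D*D)))) *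
      (r*r + g1 • (b*r) + g2 • wI2 a b p r + g3 • wI3 a b p r + g4 • wI4 a b p r) =
    (r*r + g1 • (b*r) + g2 • wI2 a b p r + g3 • wI3 a b p r + g4 • wI4 a b p r) *
    (p*p+r*r + g1 • D + g2 • (D*D) + g3 • (D*(D*D)) + g4 • (D*(D*(D*D)))) := by
  have d1 := D1 h
  have d2 := D2 h
  have d3 := D3 h
  have d4 := D4 h
  have h1 := H1 h
  have h2 := H2 h
  have h3 := H3 h
  have h4 := H4 h
  rw [← hD] at d1 d2 d3 d4 h1 h2 h3 h4
  have h0 : (p*p+r*r)*(r*r) = (r*r)*(p*p+r*r) := by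
    simp only [mul_add, add_mul, mul_assoc, h.pr, lft h.pr]
  generalize wI2 a b p r = J2 at *
  generalize wI3 a b p r = J3 at *
  generalize wI4 a b p r = J4 at *
  generalize p*p+r*r = K at *
  generalize r*r = J0 at *
  generalize b*r = J1 at *
  have c : ∀ J : A, D * J = J * D → ∀ x : ℂ × ℂ × ℂ × ℂ,
      (x.1 • D + x.2.1 • (D*D) + x.2.2.1 • (D*(D*D)) + x.2.2.2 • (D*(D*(D*D)))) * J =
      J * (x.1 • D + x.2.1 • (D*D) + x.2.2.1 • (D*(D*D)) + x.2.2.2 • (D*(D*(D*D)))) := by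
    intro J hJ x
    simp only [mul_add, add_mul, mul_assoc, smul_mul_assoc, mul_smul_comm, hJ, lft hJ]
  have e1 := c _ d1 (g1, g2, g3, g4)
  have e2 := c _ d2 (g1, g2, g3, g4)
  have e3 := c _ d3 (g1, g2, g3, g4)
  have e4 := c _ d4 (g1, g2, g3, g4)
  have e0 : K * (g1 • J1 + g2 • J2 + g3 • J3 + g4 • J4) +
      (g1 • D + g2 • (D*D) + g3 • (D*(D*D)) + g4 • (D*(D*(D*D)))) * J0 =
      (g1 • J1 + g2 • J2 + g3 • J3 + g4 • J4) * K +
      J0 * (g1 • D + g2 • (D*D) + g3 • (D*(D*D)) + g4 • (D*(D*(D*D)))) := by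
    simp only [mul_add, add_mul, mul_assoc, smul_mul_assoc, mul_smul_comm]
    rw [← sub_eq_zero] at h1 h2 h3 h4 ⊢
    calc _ = g1 • (K * J1 + D * J0 - (J1 * K + J0 * D))
          + g2 • (K * J2 + D * (D * J0) - (J2 * K + J0 * (D * D)))
          + g3 • (K * J3 + D * (D * (D * J0)) - (J3 * K + J0 * (D * (D * D))))
          + g4 • (K * J4 + D * (D * (D * (D * J0))) - (J4 * K + J0 * (D * (D * (D * D))))) := by
            simp only [smul_add, smul_sub]; abel
      _ = 0 := by rw [h1, h2, h3, h4]; simp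
  simp only at e1 e2 e3 e4
  set S := g1 • D + g2 • (D*D) + g3 • (D*(D*D)) + g4 • (D*(D*(D*D))) with hS
  set T := g1 • J1 + g2 • J2 + g3 • J3 + g4 • J4 with hT
  have eST : S * T = T * S := by
    rw [hT]
    simp only [mul_add, add_mul, smul_mul_assoc, mul_smul_comm, e1, e2, e3, e4]
  have q1 : K + g1 • D + g2 • (D*D) + g3 • (D*(D*D)) + g4 • (D*(D*(D*D))) = K + S := by
    rw [hS]; abel
  have q2 : J0 + g1 • J1 + g2 • J2 + g3 • J3 + g4 • J4 = J0 + T := by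
    rw [hT]; abel
  rw [q1, q2]
  clear_value S T
  calc (K + S) * (J0 + T) = K * J0 + S * T + (K * T + S * J0) := by noncomm_ring
    _ = J0 * K + T * S + (T * K + J0 * S) := by rw [h0, eST, e0]
    _ = _ := by noncomm_ring

/-- Smooth wavefunctions. -/
def SmoothWF : Submodule ℂ WF where
  carrier := {ψ | ContDiff ℝ (⊤ : ℕ∞) ψ}
  add_mem' := by
    intro f g h1 h2
    rw [Set.mem_setOf_eq] at *
    exact h1.add h2
  zero_mem' := by
    rw [Set.mem_setOf_eq]
    exact contDiff_const
  smul_mem' := by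
    intro c f h
    rw [Set.mem_setOf_eq] at *
    exact contDiff_const.smul h

theorem deriv1 {ψ : WF} (h : ContDiff ℝ (⊤ : ℕ∞) ψ) (x : ℝ × ℝ) :
    HasDerivAt (fun t => ψ (t, x.2)) (fderiv ℝ ψ x (1, 0)) x.1 := by
  have h1 : HasFDerivAt ψ (fderiv ℝ ψ x) x :=
    (h.differentiable (by simp) x).hasFDerivAt
  have h2 : HasDerivAt (fun t : ℝ => (t, x.2)) ((1 : ℝ), (0 : ℝ)) x.1 :=
    (hasDerivAt_id x.1).prodMk (hasDerivAt_const _ _)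
  exact h1.comp_hasDerivAt (f := fun t : ℝ => (t, x.2)) x.1 h2

theorem deriv2 {ψ : WF} (h : ContDiff ℝ (⊤ : ℕ∞) ψ) (x : ℝ × ℝ) :
    HasDerivAt (fun t => ψ (x.1, t)) (fderiv ℝ ψ x (0, 1)) x.2 := by
  have h1 : HasFDerivAt ψ (fderiv ℝ ψ x) x :=
    (h.differentiable (by simp) x).hasFDerivAt
  have h2 : HasDerivAt (fun t : ℝ => (x.1, t)) ((0 : ℝ), (1 : ℝ)) x.2 :=
    (hasDerivAt_const _ _).prodMk (hasDerivAt_id x.2)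
  exact h1.comp_hasDerivAt (f := fun t : ℝ => (x.1, t)) x.2 h2

theorem p1_eq {ψ : WF} (h : ContDiff ℝ (⊤ : ℕ∞) ψ) :
    p1op ψ = fun x => -I * fderiv ℝ ψ x (1, 0) := by
  funext x
  rw [p1op, (deriv1 h x).deriv]

theorem p2_eq {ψ : WF} (h : ContDiff ℝ (⊤ : ℕ∞) ψ) :
    p2op ψ = fun x => -I * fderiv ℝ ψ x (0, 1) := by
  funext x
  rw [p2op, (deriv2 h x).deriv]

theorem smooth_fd {ψ : WF} (h : ContDiff ℝ (⊤ : ℕ∞) ψ) (v : ℝ × ℝ) :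
    ContDiff ℝ (⊤ : ℕ∞) (fun x => -I * fderiv ℝ ψ x v) := by
  have : ContDiff ℝ (⊤ : ℕ∞) (fderiv ℝ ψ) := h.fderiv_right (by simp)
  exact contDiff_const.mul (this.clm_apply contDiff_const)

theorem smooth_x1 : ContDiff ℝ (⊤ : ℕ∞) (fun x : ℝ × ℝ => (x.1 : ℂ)) :=
  ofRealCLM.contDiff.comp contDiff_fst

theorem smooth_x2 : ContDiff ℝ (⊤ : ℕ∞) (fun x : ℝ × ℝ => (x.2 : ℂ)) :=
  ofRealCLM.contDiff.comp contDiff_snd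

def Q1 : Module.End ℂ SmoothWF where
  toFun ψ := ⟨q1op ψ, smooth_x1.mul ψ.2⟩
  map_add' f g := by ext x; simp [q1op, mul_add]
  map_smul' c f := by ext x; simp [q1op]; ring

def Q2 : Module.End ℂ SmoothWF where
  toFun ψ := ⟨q2op ψ, smooth_x2.mul ψ.2⟩
  map_add' f g := by ext x; simp [q2op, mul_add]
  map_smul' c f := by ext x; simp [q2op]; ring

def P1 : Module.End ℂ SmoothWF where
  toFun ψ := ⟨p1op ψ, by rw [p1_eq ψ.2]; exact smooth_fd ψ.2 _⟩
  map_add' f g := by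
    ext x
    have := ((deriv1 f.2 x).add (deriv1 g.2 x)).deriv
    rw [← (deriv1 f.2 x).deriv, ← (deriv1 g.2 x).deriv] at this
    exact (congrArg (fun z => -I * z) this).trans (mul_add _ _ _)
  map_smul' c f := by
    ext x
    have := ((deriv1 f.2 x).const_mul c).deriv
    rw [← (deriv1 f.2 x).deriv] at this
    exact (congrArg (fun z => -I * z) this).trans (mul_left_comm _ _ _)

def P2 : Module.End ℂ SmoothWF where
  toFun ψ := ⟨p2op ψ, by rw [p2_eq ψ.2]; exact smooth_fd ψ.2 _⟩
  map_add' f g := by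
    ext x
    have := ((deriv2 f.2 x).add (deriv2 g.2 x)).deriv
    rw [← (deriv2 f.2 x).deriv, ← (deriv2 g.2 x).deriv] at this
    exact (congrArg (fun z => -I * z) this).trans (mul_add _ _ _)
  map_smul' c f := by
    ext x
    have := ((deriv2 f.2 x).const_mul c).deriv
    rw [← (deriv2 f.2 x).deriv] at this
    exact (congrArg (fun z => -I * z) this).trans (mul_left_comm _ _ _)

theorem fd_fd {ψ : WF} (h : ContDiff ℝ (⊤ : ℕ∞) ψ) (v w x : ℝ × ℝ) :
    fderiv ℝ (fun y => -I * fderiv ℝ ψ y v) x w = -I * fderiv ℝ (fderiv ℝ ψ) x w v := by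
  have h1 : ContDiff ℝ (⊤ : ℕ∞) (fderiv ℝ ψ) := h.fderiv_right (by simp)
  have h2 : HasFDerivAt (fderiv ℝ ψ) (fderiv ℝ (fderiv ℝ ψ) x) x :=
    (h1.differentiable (by simp) x).hasFDerivAt
  have h3 := (h2.clm_apply (hasFDerivAt_const v x)).const_mul (-I)
  rw [h3.fderiv]
  simp

theorem weyl_ops : Weyl Q1 Q2 P1 P2 where
  ab := by
    ext ψ x
    exact mul_left_comm _ _ _
  pr := by
    ext ψ x
    change p2op (p1op ψ) x = p1op (p2op ψ) x
    have hs : ContDiff ℝ (⊤ : ℕ∞) (ψ : WF) := ψ.2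
    rw [p1_eq hs, p2_eq hs, p1_eq (smooth_fd hs _), p2_eq (smooth_fd hs _)]
    simp only [fd_fd hs]
    have := (hs.contDiffAt (x := x)).isSymmSndFDerivAt (by
      simp only [minSmoothness_of_isRCLikeNormedField]; exact WithTop.coe_le_coe.2 (le_top : (2 : ℕ∞) ≤ ⊤))
    rw [this.eq]
  pa := by
    ext ψ x
    change -I * deriv (fun t : ℝ => (t : ℂ) * (ψ : WF) (t, x.2)) x.1 =
      (x.1 : ℂ) * (-I * deriv (fun t => (ψ : WF) (t, x.2)) x.1) - I * (ψ : WF) x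
    have e : deriv (fun t : ℝ => (t : ℂ) * (ψ : WF) (t, x.2)) x.1 = _ :=
      ((hasDerivAt_id x.1).ofReal_comp.mul (deriv1 ψ.2 x)).deriv
    rw [e, (deriv1 ψ.2 x).deriv]
    simp
    ring
  rb := by
    ext ψ x
    change -I * deriv (fun t : ℝ => (t : ℂ) * (ψ : WF) (x.1, t)) x.2 =
      (x.2 : ℂ) * (-I * deriv (fun t => (ψ : WF) (x.1, t)) x.2) - I * (ψ : WF) x
    have e : deriv (fun t : ℝ => (t : ℂ) * (ψ : WF) (x.1, t)) x.2 = _ :=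
      ((hasDerivAt_id x.2).ofReal_comp.mul (deriv2 ψ.2 x)).deriv
    rw [e, (deriv2 ψ.2 x).deriv]
    simp
    ring
  pb := by
    ext ψ x
    change -I * deriv (fun t : ℝ => (x.2 : ℂ) * (ψ : WF) (t, x.2)) x.1 =
      (x.2 : ℂ) * (-I * deriv (fun t => (ψ : WF) (t, x.2)) x.1)
    rw [((deriv1 ψ.2 x).const_mul _).deriv, (deriv1 ψ.2 x).deriv]
    ring
  ra := by
    ext ψ x
    change -I * deriv (fun t : ℝ => (x.1 : ℂ) * (ψ : WF) (x.1, t)) x.2 =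
      (x.1 : ℂ) * (-I * deriv (fun t => (ψ : WF) (x.1, t)) x.2)
    rw [((deriv2 ψ.2 x).const_mul _).deriv, (deriv2 ψ.2 x).deriv]
    ring

def Lifts (F : Module.End ℂ SmoothWF) (O : Op) : Prop :=
  ∀ φ : SmoothWF, ((F φ : SmoothWF) : WF) = O φ

theorem Lifts.add {F G : Module.End ℂ SmoothWF} {O U : Op} (h : Lifts F O) (k : Lifts G U) :
    Lifts (F + G) (O + U) := fun φ => by
  rw [Pi.add_apply, ← h φ, ← k φ]; rfl

theorem Lifts.sub {F G : Module.End ℂ SmoothWF} {O U : Op} (h : Lifts F O) (k : Lifts G U) :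
    Lifts (F - G) (O - U) := fun φ => by
  rw [Pi.sub_apply, ← h φ, ← k φ]; rfl

theorem Lifts.smul {F : Module.End ℂ SmoothWF} {O : Op} (c : ℂ) (h : Lifts F O) :
    Lifts (c • F) (c • O) := fun φ => by
  rw [Pi.smul_apply, ← h φ]; rfl

theorem Lifts.comp {F G : Module.End ℂ SmoothWF} {O U : Op} (h : Lifts F O) (k : Lifts G U) :
    Lifts (F * G) (O ∘ U) := fun φ => by
  rw [Function.comp_apply, ← k φ, ← h (G φ)]; rfl

theorem lq1 : Lifts Q1 q1op := fun _ => rfl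
theorem lq2 : Lifts Q2 q2op := fun _ => rfl
theorem lp1 : Lifts P1 p1op := fun _ => rfl
theorem lp2 : Lifts P2 p2op := fun _ => rfl

theorem lD : Lifts (Q1 * P1 + Q2 * P2) Dop := (lq1.comp lp1).add (lq2.comp lp2)

theorem lH (g1 g2 g3 g4 : ℂ) (D : Module.End ℂ SmoothWF) (h : Lifts D Dop) :
    Lifts (P1*P1+P2*P2 + g1 • D + g2 • (D*D) + g3 • (D*(D*D)) + g4 • (D*(D*(D*D))))
      (H4op g1 g2 g3 g4) := by
  unfold H4op
  repeat' first
    | exact h | exact lp1 | exact lp2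
    | apply Lifts.add | apply Lifts.smul | apply Lifts.comp

theorem lI (g1 g2 g3 g4 : ℂ) :
    Lifts (P2*P2 + g1 • (Q2*P2) + g2 • wI2 Q1 Q2 P1 P2 + g3 • wI3 Q1 Q2 P1 P2
      + g4 • wI4 Q1 Q2 P1 P2) (I4op g1 g2 g3 g4) := by
  unfold I4op Iop wI2 wI3 wI4
  dsimp only
  repeat' first
    | exact lq1 | exact lq2 | exact lp1 | exact lp2
    | apply Lifts.add | apply Lifts.sub | apply Lifts.smul | apply Lifts.comp

/-- The operator `Î₄` commutes with the generalized quantum Zernike Hamiltonian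
`Ĥ₄` on smooth functions: `Ĥ₄(Î₄ψ) = Î₄(Ĥ₄ψ)`. -/
theorem H4op_commutes_I4op (γ₁ γ₂ γ₃ γ₄ : ℂ)
    (ψ : WF) (hψ : ContDiff ℝ (⊤ : ℕ∞) ψ) :
    H4op γ₁ γ₂ γ₃ γ₄ (I4op γ₁ γ₂ γ₃ γ₄ ψ) =
      I4op γ₁ γ₂ γ₃ γ₄ (H4op γ₁ γ₂ γ₃ γ₄ ψ) := by
  have hH := lH γ₁ γ₂ γ₃ γ₄ _ lD
  have hI := lI γ₁ γ₂ γ₃ γ₄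
  have key := wcomm weyl_ops γ₁ γ₂ γ₃ γ₄ _ rfl
  have h1 := hH.comp hI ⟨ψ, hψ⟩
  have h2 := hI.comp hH ⟨ψ, hψ⟩
  rw [key] at h1
  exact h1.symm.trans h2
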